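/- Let v : ℝ² → ℝ² satisfy the log-Lipschitz estimate |v(x) − v(y)| ≤ C₀ |x − y| (1 + log(1 + 1/|x − y|)) for all x, y ∈ ℝ², and let η be a finite nonnegative measure on ℝ² × ℝ² with total mass M > 0 such that Q := ∬ |x − y|² dη(x,y) is finite and positive. Then | ∬ (x − y) · ( v(x) − v(y) ) dη(x,y) | ≤ C₀ Q ( 1 + log(1 + √(M/Q)) ). -/

import Mathlib

open MeasureTheory Real
open scoped ENNReal RealInnerProductSpace

noncomputable section

abbrev E2 : Type := EuclideanSpace ℝ (Fin 2)

/-!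
For `r = |x - y| > 0` write `r² log (1 + 1 / r) = r² φ (1 / r²)` with `φ s = log (1 + √s)`. Since
`φ` is concave, it lies below its tangent line at `s = M / Q`; multiplying by `r²` gives a bound
that is affine in `r²`. Its integral is `Q φ (M / Q)`, because the correction terms `M` and
`(M / Q) * Q` cancel.
-/

open Filter Topology

/-- The log-Lipschitz modulus of continuity `r (1 + log (1 + 1 / r))`. Division by zero makes its
value at `r = 0` equal to `0`, which is also its limit as `r` decreases to `0`. -/
def logModulus (r : ℝ) : ℝ := r * (1 + log (1 + 1 / r))

lemma measurable_logModulus : Measurable logModulus := by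
  unfold logModulus
  fun_prop

lemma logModulus_zero : logModulus 0 = 0 := zero_mul _

lemma logModulus_pos {r : ℝ} (hr : 0 < r) : 0 < logModulus r := by
  have hlog : 0 ≤ log (1 + 1 / r) := log_nonneg (le_add_of_nonneg_right (by positivity))
  unfold logModulus
  positivity

lemma logModulus_nonneg {r : ℝ} (hr : 0 ≤ r) : 0 ≤ logModulus r := by
  rcases hr.eq_or_lt with rfl | hr
  · exact logModulus_zero.ge
  · exact (logModulus_pos hr).le

lemma logModulus_le_add_two_mul_sqrt {r : ℝ} (hr : 0 ≤ r) : logModulus r ≤ r + 2 * √r := by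
  rcases hr.eq_or_lt with rfl | hr
  · simp [logModulus_zero]
  have hlog : log (1 + 1 / r) ≤ 2 * (1 / √r) := calc
    log (1 + 1 / r) ≤ log ((1 + 1 / √r) ^ 2) := by
      gcongr
      have hsq : (1 / √r) ^ 2 = 1 / r := by rw [div_pow, sq_sqrt hr.le, one_pow]
      have : 0 ≤ 1 / √r := by positivity
      linarith [add_sq 1 (1 / √r)]
    _ = 2 * log (1 + 1 / √r) := by rw [log_pow]; norm_cast
    _ ≤ 2 * (1 / √r) := by
      gcongr
      linarith [log_le_sub_one_of_pos (show 0 < 1 + 1 / √r by positivity)]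
  calc logModulus r ≤ r * (1 + 2 * (1 / √r)) := by unfold logModulus; gcongr
    _ = r + 2 * (r / √r) := by ring
    _ = r + 2 * √r := by rw [div_sqrt]

lemma tendsto_logModulus_nhdsGE_zero : Tendsto logModulus (𝓝[≥] 0) (𝓝 0) := by
  have hbound : Tendsto (fun r : ℝ => r + 2 * √r) (𝓝[≥] 0) (𝓝 0) := by
    have hcont : Continuous fun r : ℝ => r + 2 * √r := by fun_prop
    simpa using (hcont.tendsto 0).mono_left nhdsWithin_le_nhds
  refine squeeze_zero' ?_ ?_ hbound <;> filter_upwards [self_mem_nhdsWithin] with r hr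
  · exact logModulus_nonneg hr
  · exact logModulus_le_add_two_mul_sqrt hr

/-- A map between pseudometric spaces whose modulus of continuity is at most `C` times
`logModulus`. As no sign is imposed on the constant, it is a real number rather than an element of
`ℝ≥0`. -/
def LogLipschitzWith {X Y : Type*} [PseudoMetricSpace X] [PseudoMetricSpace Y]
    (C : ℝ) (v : X → Y) : Prop :=
  ∀ x y, dist (v x) (v y) ≤ C * logModulus (dist x y)

namespace LogLipschitzWith

variable {X Y : Type*} [PseudoMetricSpace Y] {C : ℝ} {v : X → Y}

protected lemma continuous [PseudoMetricSpace X] (hv : LogLipschitzWith C v) : Continuous v := by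
  refine continuous_iff_continuousAt.2 fun x => tendsto_iff_dist_tendsto_zero.2 ?_
  have hdist : Tendsto (fun y => dist y x) (𝓝 x) (𝓝[≥] 0) :=
    tendsto_nhdsWithin_iff.2 ⟨tendsto_iff_dist_tendsto_zero.1 tendsto_id,
      Eventually.of_forall fun _ => dist_nonneg⟩
  have hbound := (tendsto_logModulus_nhdsGE_zero.comp hdist).const_mul C
  rw [mul_zero] at hbound
  exact squeeze_zero (fun _ => dist_nonneg) (fun y => hv y x) hbound

lemma nonneg [MetricSpace X] [Nontrivial X] (hv : LogLipschitzWith C v) : 0 ≤ C := by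
  obtain ⟨x, y, hxy⟩ := exists_pair_ne X
  exact nonneg_of_mul_nonneg_left (dist_nonneg.trans (hv x y)) (logModulus_pos (dist_pos.2 hxy))

end LogLipschitzWith

/-- The right-hand side is the tangent line of `s ↦ log (1 + √s)` at `s = a ^ 2`, evaluated at
`s = b ^ 2`. -/
lemma log_one_add_le_tangent_sq {a b : ℝ} (ha : 0 < a) (hb : 0 < 1 + b) :
    log (1 + b) ≤ log (1 + a) + (b ^ 2 - a ^ 2) / (2 * a * (1 + a)) := by
  have hlog : log (1 + b) - log (1 + a) ≤ (1 + b) / (1 + a) - 1 := by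
    rw [← log_div hb.ne' (by positivity)]
    exact log_le_sub_one_of_pos (by positivity)
  have hgap : (b ^ 2 - a ^ 2) / (2 * a * (1 + a)) - ((1 + b) / (1 + a) - 1)
      = (b - a) ^ 2 / (2 * a * (1 + a)) := by
    field_simp
    ring
  have hgap_nonneg : 0 ≤ (b - a) ^ 2 / (2 * a * (1 + a)) := by positivity
  linarith

lemma mul_logModulus_le {a r : ℝ} (ha : 0 < a) (hr : 0 ≤ r) :
    r * logModulus r ≤
      (1 + log (1 + a)) * r ^ 2 + (2 * a * (1 + a))⁻¹ * (1 - a ^ 2 * r ^ 2) := by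
  rcases hr.eq_or_lt with rfl | hr
  · have hcoeff : 0 ≤ (2 * a * (1 + a))⁻¹ := by positivity
    linarith
  calc r * logModulus r = r ^ 2 * (1 + log (1 + 1 / r)) := by unfold logModulus; ring
    _ ≤ r ^ 2 * (1 + (log (1 + a) + ((1 / r) ^ 2 - a ^ 2) / (2 * a * (1 + a)))) := by
      gcongr
      exact log_one_add_le_tangent_sq ha (by positivity)
    _ = (1 + log (1 + a)) * r ^ 2 + (2 * a * (1 + a))⁻¹ * (1 - a ^ 2 * r ^ 2) := by
      field_simp
      ring

section Integral

variable {α : Type*} [MeasurableSpace α] {μ : Measure α} [IsFiniteMeasure μ] {f : α → ℝ}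

lemma integrable_mul_logModulus (hf : MemLp f 2 μ) (hf_nonneg : 0 ≤ f) :
    Integrable (fun x => f x * logModulus (f x)) μ := by
  have hmeas : AEStronglyMeasurable (fun x => f x * logModulus (f x)) μ :=
    hf.1.mul (measurable_logModulus.comp_aemeasurable hf.1.aemeasurable).aestronglyMeasurable
  have hdom : Integrable (fun x => (1 + log (1 + 1)) * f x ^ 2
      + (2 * 1 * (1 + 1) : ℝ)⁻¹ * (1 - 1 ^ 2 * f x ^ 2)) μ :=
    (hf.integrable_sq.const_mul _).add
      (((integrable_const 1).sub (hf.integrable_sq.const_mul _)).const_mul _)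
  refine hdom.mono' hmeas (Eventually.of_forall fun x => ?_)
  rw [norm_of_nonneg (mul_nonneg (hf_nonneg x) (logModulus_nonneg (hf_nonneg x)))]
  exact mul_logModulus_le one_pos (hf_nonneg x)

lemma integral_mul_logModulus_le (hf : MemLp f 2 μ) (hf_nonneg : 0 ≤ f)
    (hpos : 0 < ∫ x, f x ^ 2 ∂μ) :
    ∫ x, f x * logModulus (f x) ∂μ ≤
      (∫ x, f x ^ 2 ∂μ) * (1 + log (1 + √(μ.real Set.univ / ∫ x, f x ^ 2 ∂μ))) := by
  have : NeZero μ := ⟨by rintro rfl; simp at hpos⟩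
  set Q := ∫ x, f x ^ 2 ∂μ with hQ
  set a := √(μ.real Set.univ / Q) with ha
  have hmass : 0 < μ.real Set.univ := measureReal_univ_pos
  have ha_pos : 0 < a := by positivity
  have ha_sq : a ^ 2 * Q = μ.real Set.univ := by
    rw [ha, sq_sqrt (by positivity), div_mul_cancel₀ _ hpos.ne']
  have hmain : Integrable (fun x => (1 + log (1 + a)) * f x ^ 2) μ := hf.integrable_sq.const_mul _
  have hsq : Integrable (fun x => a ^ 2 * f x ^ 2) μ := hf.integrable_sq.const_mul _
  have hcorr : Integrable (fun x => (2 * a * (1 + a))⁻¹ * (1 - a ^ 2 * f x ^ 2)) μ :=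
    ((integrable_const 1).sub hsq).const_mul _
  have hcorr_integral : ∫ x, (2 * a * (1 + a))⁻¹ * (1 - a ^ 2 * f x ^ 2) ∂μ = 0 := by
    rw [integral_const_mul, integral_sub (integrable_const 1) hsq, integral_const_mul, ← hQ,
      ha_sq, integral_const, smul_eq_mul, mul_one, sub_self, mul_zero]
  calc ∫ x, f x * logModulus (f x) ∂μ
      ≤ ∫ x, ((1 + log (1 + a)) * f x ^ 2
          + (2 * a * (1 + a))⁻¹ * (1 - a ^ 2 * f x ^ 2)) ∂μ :=
        integral_mono (integrable_mul_logModulus hf hf_nonneg) (hmain.add hcorr)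
          fun x => mul_logModulus_le ha_pos (hf_nonneg x)
    _ = Q * (1 + log (1 + a)) := by
      rw [integral_add hmain hcorr, hcorr_integral, integral_const_mul, add_zero, mul_comm]

end Integral

section InnerProductSpace

variable {E : Type*} [NormedAddCommGroup E] [InnerProductSpace ℝ E]

lemma LogLipschitzWith.abs_inner_sub_le {C : ℝ} {v : E → E} (hv : LogLipschitzWith C v) (x y : E) :
    |⟪x - y, v x - v y⟫| ≤ C * (‖x - y‖ * logModulus ‖x - y‖) :=
  calc |⟪x - y, v x - v y⟫| ≤ ‖x - y‖ * ‖v x - v y‖ := abs_real_inner_le_norm _ _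
    _ ≤ ‖x - y‖ * (C * logModulus ‖x - y‖) := by
      gcongr
      simpa only [dist_eq_norm] using hv x y
    _ = C * (‖x - y‖ * logModulus ‖x - y‖) := by ring

theorem logLipschitz_term_estimate_general [MeasurableSpace E] [BorelSpace E]
    [SecondCountableTopology E] {C : ℝ} {v : E → E} (hv : LogLipschitzWith C v)
    {η : Measure (E × E)} [IsFiniteMeasure η]
    (hint : Integrable (fun p : E × E => ‖p.1 - p.2‖ ^ 2) η)
    (hpos : 0 < ∫ p, ‖p.1 - p.2‖ ^ 2 ∂η) :
    Integrable (fun p : E × E => ⟪p.1 - p.2, v p.1 - v p.2⟫) η ∧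
      |∫ p, ⟪p.1 - p.2, v p.1 - v p.2⟫ ∂η| ≤
        C * (∫ p, ‖p.1 - p.2‖ ^ 2 ∂η) *
          (1 + log (1 + √(η.real Set.univ / ∫ p, ‖p.1 - p.2‖ ^ 2 ∂η))) := by
  have hC : 0 ≤ C := by
    have : Nontrivial E := by
      by_contra htriv
      rw [not_nontrivial_iff_subsingleton] at htriv
      simp [Subsingleton.elim _ (0 : E)] at hpos
    exact hv.nonneg
  have hdist : MemLp (fun p : E × E => ‖p.1 - p.2‖) 2 η :=
    (memLp_two_iff_integrable_sq (by fun_prop)).2 hint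
  have hdist_nonneg : 0 ≤ fun p : E × E => ‖p.1 - p.2‖ := fun _ => norm_nonneg _
  have hdom := (integrable_mul_logModulus hdist hdist_nonneg).const_mul C
  have hbound (p : E × E) := hv.abs_inner_sub_le p.1 p.2
  have hcont := hv.continuous
  refine ⟨hdom.mono' (Continuous.aestronglyMeasurable (by fun_prop)) (.of_forall hbound), ?_⟩
  calc |∫ p, ⟪p.1 - p.2, v p.1 - v p.2⟫ ∂η|
      ≤ ∫ p, C * (‖p.1 - p.2‖ * logModulus ‖p.1 - p.2‖) ∂η :=
        (norm_eq_abs _).symm.trans_le (norm_integral_le_of_norm_le hdom (.of_forall hbound))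
    _ = C * ∫ p, ‖p.1 - p.2‖ * logModulus ‖p.1 - p.2‖ ∂η := integral_const_mul _ _
    _ ≤ _ := by
      rw [mul_assoc]
      gcongr
      exact integral_mul_logModulus_le hdist hdist_nonneg hpos

end InnerProductSpace

/-- **Estimate of the term `I¹`**: if `v` is log-Lipschitz with constant `C₀` and `η` is a
finite nonnegative measure on `ℝ² × ℝ²` of total mass `M > 0` with finite positive quadratic
cost `Q`, then `|∬ (x−y)·(v(x)−v(y)) dη| ≤ C₀ Q (1 + log(1 + √(M/Q)))`. -/
theorem logLipschitz_term_estimate (v : E2 → E2) (C₀ : ℝ)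
    (hv : ∀ x y : E2, ‖v x - v y‖ ≤ C₀ * ‖x - y‖ * (1 + Real.log (1 + 1 / ‖x - y‖)))
    (η : Measure (E2 × E2)) (M Q : ℝ)
    (hmass : η Set.univ = ENNReal.ofReal M) (hM : 0 < M)
    (hQint : Integrable (fun p : E2 × E2 => ‖p.1 - p.2‖ ^ 2) η)
    (hQ : Q = ∫ p : E2 × E2, ‖p.1 - p.2‖ ^ 2 ∂η) (hQpos : 0 < Q)
    (hint : Integrable (fun p : E2 × E2 => (⟪p.1 - p.2, v p.1 - v p.2⟫ : ℝ)) η) :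
    |∫ p : E2 × E2, (⟪p.1 - p.2, v p.1 - v p.2⟫ : ℝ) ∂η|
      ≤ C₀ * Q * (1 + Real.log (1 + Real.sqrt (M / Q))) := by
  have hv' : LogLipschitzWith C₀ v := fun x y => by
    simpa only [dist_eq_norm, logModulus, mul_assoc] using hv x y
  have : IsFiniteMeasure η := ⟨hmass ▸ ENNReal.ofReal_lt_top⟩
  have hreal : η.real Set.univ = M := by rw [measureReal_def, hmass, ENNReal.toReal_ofReal hM.le]
  subst hQ
  exact hreal ▸ (logLipschitz_term_estimate_general hv' hQint hQpos).2
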